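/- The direct and inverse backstepping kernels satisfy the reciprocity identity: for all real numbers x ≤ s, q(x,s) + r(x,s) = ∫_x^s q(x,y) r(y,s) dy. -/

import Mathlib

/-- `Φ_j(x,y) = 2^{-j} ∑_{m=0}^∞ ((λ/(4D))(y² − x²))^m / (m! (m+j)!)`. -/
noncomputable def Phi (D lam : ℝ) (j : ℕ) (x y : ℝ) : ℝ :=
  (1 / 2 ^ j) *
    ∑' m : ℕ, (lam / (4 * D) * (y ^ 2 - x ^ 2)) ^ m / (m.factorial * (m + j).factorial : ℝ)

/-- `Ψ_j(x,y) = 2^{-j} ∑_{m=0}^∞ (−(λ/(4D))(y² − x²))^m / (m! (m+j)!)`. -/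
noncomputable def Psi (D lam : ℝ) (j : ℕ) (x y : ℝ) : ℝ :=
  (1 / 2 ^ j) *
    ∑' m : ℕ, (-(lam / (4 * D)) * (y ^ 2 - x ^ 2)) ^ m / (m.factorial * (m + j).factorial : ℝ)

/-- The direct backstepping kernel `q(x,y) = −(λ/D) x Φ₁(x,y)`. -/
noncomputable def qker (D lam : ℝ) (x y : ℝ) : ℝ :=
  -(lam / D) * x * Phi D lam 1 x y

/-- The inverse backstepping kernel `r(x,y) = (λ/D) x Ψ₁(x,y)`. -/
noncomputable def rker (D lam : ℝ) (x y : ℝ) : ℝ :=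
  lam / D * x * Psi D lam 1 x y

/-!
The two kernels are one family: in terms of the entire Bessel–Clifford function `𝒞₁` and
`a = λ/(4D)`, the kernel `q(x,y)` is `-2 a x 𝒞₁(a y² - a x²)` and `r(x,y)` is the same expression
with `a` replaced by `-a`. Since `𝒞₀' = 𝒞₁` and `(u 𝒞₁(u))' = 𝒞₀(u)`, the function
`(u - p) 𝒞₁(u - p) 𝒞₀(u - q) - (u - q) 𝒞₁(u - q) 𝒞₀(u - p)` has derivative
`(q - p) 𝒞₁(u - p) 𝒞₁(u - q)`, because the two products `𝒞₀ 𝒞₀` cancel. Integrating from `p` to `q`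
gives a closed form for the integral of `𝒞₁(u - p) 𝒞₁(u - q)`, and the substitution `u = a y²`,
`p = a x²`, `q = a s²` turns it into the reciprocity identity.
-/

section BesselClifford

open scoped Nat

variable {𝕜 : Type*} [RCLike 𝕜]

/-- The Bessel–Clifford function `𝒞_j` of order `j`, the entire function with
`I_j(z) = (z/2)^j 𝒞_j(z²/4)` and `J_j(z) = (z/2)^j 𝒞_j(-z²/4)`. It replaces both Bessel functions,
so that no square root of the argument is needed. -/
noncomputable def besselClifford (j : ℕ) (z : 𝕜) : 𝕜 :=
  ∑' m : ℕ, z ^ m / (m ! * (m + j)! : 𝕜)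

lemma norm_pow_div_factorial_mul_factorial_le (j m : ℕ) (z : 𝕜) :
    ‖z ^ m / (m ! * (m + j)! : 𝕜)‖ ≤ ‖z‖ ^ m / m ! := by
  have h : (1 : ℝ) ≤ (m + j)! := mod_cast (m + j).factorial_pos
  rw [norm_div, norm_mul, norm_pow, RCLike.norm_natCast, RCLike.norm_natCast]
  gcongr
  exact le_mul_of_one_le_right (by positivity) h

lemma summable_besselClifford (j : ℕ) (z : 𝕜) :
    Summable fun m : ℕ ↦ z ^ m / (m ! * (m + j)! : 𝕜) :=
  .of_norm_bounded (Real.summable_pow_div_factorial ‖z‖)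
    fun m ↦ norm_pow_div_factorial_mul_factorial_le j m z

lemma besselClifford_apply_zero (j : ℕ) : besselClifford j (0 : 𝕜) = 1 / (j ! : 𝕜) := by
  rw [besselClifford, tsum_eq_single 0 fun m hm ↦ by simp [hm]]
  simp

lemma besselClifford_eq_add_tsum (j : ℕ) (z : 𝕜) :
    besselClifford j z =
      1 / (j ! : 𝕜) + ∑' m : ℕ, z ^ (m + 1) / ((m + 1)! * (m + 1 + j)! : 𝕜) := by
  rw [besselClifford, (summable_besselClifford j z).tsum_eq_zero_add]
  simp

lemma hasDerivAt_pow_succ_div_factorial (j m : ℕ) (z : 𝕜) :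
    HasDerivAt (fun z ↦ z ^ (m + 1) / ((m + 1)! * (m + 1 + j)! : 𝕜))
      (z ^ m / (m ! * (m + (j + 1))! : 𝕜)) z := by
  refine ((hasDerivAt_pow (m + 1) z).div_const _).congr_deriv ?_
  have hm : (m ! : 𝕜) ≠ 0 := mod_cast m.factorial_ne_zero
  rw [Nat.add_sub_cancel, m.factorial_succ, add_right_comm m 1 j, add_assoc m j 1]
  push_cast
  field_simp

theorem hasDerivAt_besselClifford (j : ℕ) (z : 𝕜) :
    HasDerivAt (besselClifford j) (besselClifford (j + 1) z) z := by
  have hz : z ∈ Metric.ball 0 (‖z‖ + 1) := by simp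
  have hbound (m : ℕ) (w : 𝕜) (hw : w ∈ Metric.ball 0 (‖z‖ + 1)) :
      ‖w ^ m / (m ! * (m + (j + 1))! : 𝕜)‖ ≤ (‖z‖ + 1) ^ m / m ! := by
    refine (norm_pow_div_factorial_mul_factorial_le (j + 1) m w).trans ?_
    gcongr
    exact (mem_ball_zero_iff.1 hw).le
  have hsummable : Summable fun m : ℕ ↦ z ^ (m + 1) / ((m + 1)! * (m + 1 + j)! : 𝕜) :=
    (summable_besselClifford j z).comp_injective (add_left_injective 1)
  have hderiv : HasDerivAt (fun w ↦ ∑' m : ℕ, w ^ (m + 1) / ((m + 1)! * (m + 1 + j)! : 𝕜))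
      (∑' m : ℕ, z ^ m / (m ! * (m + (j + 1))! : 𝕜)) z :=
    hasDerivAt_tsum_of_isPreconnected
      (Real.summable_pow_div_factorial (‖z‖ + 1)) Metric.isOpen_ball Metric.isPreconnected_ball
      (fun m w _ ↦ hasDerivAt_pow_succ_div_factorial j m w) hbound hz hsummable hz
  rw [funext (besselClifford_eq_add_tsum j), besselClifford]
  exact hderiv.const_add _

lemma continuous_besselClifford (j : ℕ) : Continuous (besselClifford j : 𝕜 → 𝕜) :=
  continuous_iff_continuousAt.2 fun z ↦ (hasDerivAt_besselClifford j z).continuousAt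

theorem besselClifford_recurrence (j : ℕ) (z : 𝕜) :
    (j + 1) * besselClifford (j + 1) z + z * besselClifford (j + 2) z = besselClifford j z := by
  rw [besselClifford_eq_add_tsum (j + 1), besselClifford_eq_add_tsum j, mul_add, add_assoc,
    besselClifford, ← tsum_mul_left, ← tsum_mul_left, ← Summable.tsum_add]
  · congr 1
    · have hj : (j + 1 : 𝕜) ≠ 0 := mod_cast j.succ_ne_zero
      rw [j.factorial_succ]
      push_cast
      field_simp
    · refine tsum_congr fun m ↦ ?_
      rw [m.factorial_succ, show m + 1 + (j + 1) = m + 1 + j + 1 by ring,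
        show m + (j + 2) = m + 1 + j + 1 by ring, (m + 1 + j).factorial_succ]
      have hm : (m ! : 𝕜) ≠ 0 := mod_cast m.factorial_ne_zero
      have hm₁ : (m + 1 : 𝕜) ≠ 0 := mod_cast m.succ_ne_zero
      have hmj : (m + 1 + j + 1 : 𝕜) ≠ 0 := mod_cast (m + 1 + j).succ_ne_zero
      have hfact : ((m + 1 + j)! : 𝕜) ≠ 0 := mod_cast (m + 1 + j).factorial_ne_zero
      push_cast
      field_simp
      ring
  · exact ((summable_nat_add_iff 1).2 (summable_besselClifford (j + 1) z)).mul_left _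
  · exact (summable_besselClifford (j + 2) z).mul_left _

theorem hasDerivAt_pow_succ_mul_besselClifford_succ (j : ℕ) (z : 𝕜) :
    HasDerivAt (fun z ↦ z ^ (j + 1) * besselClifford (j + 1) z) (z ^ j * besselClifford j z) z := by
  refine ((hasDerivAt_pow (j + 1) z).mul (hasDerivAt_besselClifford (j + 1) z)).congr_deriv ?_
  rw [← besselClifford_recurrence j z, Nat.add_sub_cancel]
  push_cast
  ring

lemma hasDerivAt_besselClifford_cross_product (p q u : 𝕜) :
    HasDerivAt
      (fun u ↦ (u - p) * besselClifford 1 (u - p) * besselClifford 0 (u - q) -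
        (u - q) * besselClifford 1 (u - q) * besselClifford 0 (u - p))
      ((q - p) * (besselClifford 1 (u - p) * besselClifford 1 (u - q))) u := by
  have hzero (c : 𝕜) :
      HasDerivAt (fun u ↦ besselClifford 0 (u - c)) (besselClifford 1 (u - c)) u :=
    (hasDerivAt_besselClifford 0 (u - c)).comp_sub_const u c
  have hone (c : 𝕜) :
      HasDerivAt (fun u ↦ (u - c) * besselClifford 1 (u - c)) (besselClifford 0 (u - c)) u := by
    simpa using (hasDerivAt_pow_succ_mul_besselClifford_succ 0 (u - c)).comp_sub_const u c
  refine (((hone p).mul (hzero q)).sub ((hone q).mul (hzero p))).congr_deriv ?_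
  ring

theorem integral_besselClifford_one_mul_besselClifford_one (p q : ℝ) :
    ∫ u in p..q, besselClifford 1 (u - p) * besselClifford 1 (u - q) =
      besselClifford 1 (q - p) - besselClifford 1 (p - q) := by
  rcases eq_or_ne p q with rfl | hpq
  · simp
  have hcont : Continuous fun u ↦ besselClifford 1 (u - p) * besselClifford 1 (u - q) := by
    have := continuous_besselClifford (𝕜 := ℝ) 1
    fun_prop
  have hftc := intervalIntegral.integral_eq_sub_of_hasDerivAt (a := p) (b := q)
    (fun u _ ↦ hasDerivAt_besselClifford_cross_product p q u)
    ((hcont.const_mul (q - p)).intervalIntegrable _ _)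
  refine mul_left_cancel₀ (sub_ne_zero.2 hpq.symm) ?_
  have hzero : besselClifford 0 (0 : ℝ) = 1 := by simp [besselClifford_apply_zero]
  rw [← intervalIntegral.integral_const_mul, hftc]
  simp only [sub_self, hzero]
  ring

theorem integral_besselClifford_one_sq_sub (a x s : ℝ) :
    ∫ y in x..s, besselClifford 1 (a * y ^ 2 - a * x ^ 2) *
        besselClifford 1 (a * y ^ 2 - a * s ^ 2) * (2 * a * y) =
      besselClifford 1 (a * s ^ 2 - a * x ^ 2) - besselClifford 1 (a * x ^ 2 - a * s ^ 2) := by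
  have hderiv (y : ℝ) : HasDerivAt (fun y ↦ a * y ^ 2) (2 * a * y) y :=
    ((hasDerivAt_pow 2 y).const_mul a).congr_deriv (by ring)
  rw [← integral_besselClifford_one_mul_besselClifford_one]
  refine intervalIntegral.integral_comp_mul_deriv (f := fun y ↦ a * y ^ 2)
    (g := fun u ↦ besselClifford 1 (u - a * x ^ 2) * besselClifford 1 (u - a * s ^ 2))
    (fun y _ ↦ hderiv y) (by fun_prop) ?_
  have := continuous_besselClifford (𝕜 := ℝ) 1
  fun_prop

end BesselClifford

lemma Phi_eq_besselClifford (D lam : ℝ) (j : ℕ) (x y : ℝ) :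
    Phi D lam j x y = 1 / 2 ^ j * besselClifford j (lam / (4 * D) * (y ^ 2 - x ^ 2)) :=
  rfl

lemma Psi_eq_Phi_neg (D lam : ℝ) : Psi D lam = Phi D (-lam) := by
  funext j x y
  simp only [Psi, Phi, neg_div]

lemma rker_eq_qker_neg (D lam : ℝ) : rker D lam = qker D (-lam) := by
  funext x y
  rw [rker, qker, Psi_eq_Phi_neg, neg_div, neg_neg]

lemma qker_eq_besselClifford {D : ℝ} (hD : D ≠ 0) (a x y : ℝ) :
    qker D (4 * D * a) x y = -(2 * a * x) * besselClifford 1 (a * y ^ 2 - a * x ^ 2) := by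
  have hratio : 4 * D * a / (4 * D) = a := by field_simp
  rw [qker, Phi_eq_besselClifford, hratio, ← mul_sub]
  field_simp
  ring

lemma rker_eq_besselClifford {D : ℝ} (hD : D ≠ 0) (a x y : ℝ) :
    rker D (4 * D * a) x y = 2 * a * x * besselClifford 1 (a * x ^ 2 - a * y ^ 2) := by
  rw [rker_eq_qker_neg, ← mul_neg, qker_eq_besselClifford hD]
  ring_nf

theorem kernel_reciprocity_general {D : ℝ} (hD : D ≠ 0) (lam x s : ℝ) :
    qker D lam x s + rker D lam x s = ∫ y in x..s, qker D lam x y * rker D lam y s := by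
  obtain ⟨a, rfl⟩ : ∃ a, lam = 4 * D * a := ⟨lam / (4 * D), by field_simp⟩
  simp only [qker_eq_besselClifford hD, rker_eq_besselClifford hD]
  symm
  calc ∫ y in x..s, -(2 * a * x) * besselClifford 1 (a * y ^ 2 - a * x ^ 2) *
          (2 * a * y * besselClifford 1 (a * y ^ 2 - a * s ^ 2))
      = -(2 * a * x) * ∫ y in x..s, besselClifford 1 (a * y ^ 2 - a * x ^ 2) *
          besselClifford 1 (a * y ^ 2 - a * s ^ 2) * (2 * a * y) := by
        rw [← intervalIntegral.integral_const_mul]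
        congr with y
        ring
    _ = -(2 * a * x) * besselClifford 1 (a * s ^ 2 - a * x ^ 2) +
          2 * a * x * besselClifford 1 (a * x ^ 2 - a * s ^ 2) := by
        rw [integral_besselClifford_one_sq_sub]
        ring

/-- Reciprocity identity between the direct and inverse backstepping kernels:
`q(x,s) + r(x,s) = ∫_x^s q(x,y) r(y,s) dy` for all `x ≤ s`. -/
theorem kernel_reciprocity (D lam : ℝ) (hD : 0 < D) (hlam : 0 < lam) :
    ∀ x s : ℝ, x ≤ s →
      qker D lam x s + rker D lam x s = ∫ y in x..s, qker D lam x y * rker D lam y s :=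
  fun x s _ ↦ kernel_reciprocity_general hD.ne' lam x s
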